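/- arXiv:2310.16239 — 4 statements merged into one kernel-verified Lean document; each statement's English description precedes it below -/
import Mathlib

section
/- Let X ⊆ ℝⁿ be a nonempty closed convex set, f : ℝⁿ → ℝ a function, M > 0 and γ > 0, and let F(x) = f(π_X(x)) + M·‖x − π_X(x)‖^γ. If x* ∈ X is a global minimizer of f over X, then x* is a global minimizer of F over all of ℝⁿ. -/
/-- If `x*` is a global minimizer of `f` over the nonempty closed
convex set `X`, then `x*` is a global minimizer of the projective exact penalty
function `F x = f (π_X x) + M * ‖x - π_X x‖ ^ γ` over all of `ℝⁿ`. -/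
theorem projective_penalty_minimizer_of_constrained_minimizer
    {n : ℕ} (X : Set (EuclideanSpace ℝ (Fin n)))
    (hXne : X.Nonempty) (hXcl : IsClosed X) (hXconv : Convex ℝ X)
    (f : EuclideanSpace ℝ (Fin n) → ℝ) (M γ : ℝ) (hM : 0 < M) (hγ : 0 < γ)
    (π : EuclideanSpace ℝ (Fin n) → EuclideanSpace ℝ (Fin n))
    (hπmem : ∀ x, π x ∈ X)
    (hπmin : ∀ x, ∀ y ∈ X, ‖x - π x‖ ≤ ‖x - y‖)
    (F : EuclideanSpace ℝ (Fin n) → ℝ)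
    (hF : ∀ x, F x = f (π x) + M * ‖x - π x‖ ^ γ)
    (xstar : EuclideanSpace ℝ (Fin n)) (hxstar : xstar ∈ X)
    (hmin : ∀ y ∈ X, f xstar ≤ f y) :
    ∀ y, F xstar ≤ F y := by
  intro y
  have h0 : ‖xstar - π xstar‖ = 0 :=
    le_antisymm (by simpa using hπmin xstar xstar hxstar) (norm_nonneg _)
  have h1 : π xstar = xstar := (sub_eq_zero.mp (norm_eq_zero.mp h0)).symm
  have h2 : F xstar = f xstar := by
    rw [hF, h0, h1, Real.zero_rpow hγ.ne', mul_zero, add_zero]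
  have h3 : 0 ≤ M * ‖y - π y‖ ^ γ := mul_nonneg hM.le (Real.rpow_nonneg (norm_nonneg _) _)
  have h4 := hmin (π y) (hπmem y)
  rw [h2, hF y]
  linarith
end

section
/- Let X ⊆ ℝⁿ be a nonempty closed convex set, f : ℝⁿ → ℝ a function, M > 0 and γ > 0, and let F(x) = f(π_X(x)) + M·‖x − π_X(x)‖^γ. If x* is a global minimizer of F over all of ℝⁿ, then x* ∈ X and x* is a global minimizer of f over X. -/
/-- If `x*` is a global minimizer over `ℝⁿ` of the projective exact
penalty function `F x = f (π_X x) + M * ‖x - π_X x‖ ^ γ`, then `x* ∈ X` and `x*`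
is a global minimizer of `f` over `X`. -/
theorem constrained_minimizer_of_projective_penalty_minimizer
    {n : ℕ} (X : Set (EuclideanSpace ℝ (Fin n)))
    (hXne : X.Nonempty) (hXcl : IsClosed X) (hXconv : Convex ℝ X)
    (f : EuclideanSpace ℝ (Fin n) → ℝ) (M γ : ℝ) (hM : 0 < M) (hγ : 0 < γ)
    (π : EuclideanSpace ℝ (Fin n) → EuclideanSpace ℝ (Fin n))
    (hπmem : ∀ x, π x ∈ X)
    (hπmin : ∀ x, ∀ y ∈ X, ‖x - π x‖ ≤ ‖x - y‖)
    (F : EuclideanSpace ℝ (Fin n) → ℝ)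
    (hF : ∀ x, F x = f (π x) + M * ‖x - π x‖ ^ γ)
    (xstar : EuclideanSpace ℝ (Fin n))
    (hmin : ∀ y, F xstar ≤ F y) :
    xstar ∈ X ∧ ∀ y ∈ X, f xstar ≤ f y := by
  have hfix : ∀ y ∈ X, π y = y := by
    intro y hy
    have h := hπmin y y hy
    rw [sub_self, norm_zero] at h
    exact (sub_eq_zero.mp (norm_le_zero_iff.mp h)).symm
  have hFX : ∀ y ∈ X, F y = f y := by
    intro y hy
    rw [hF, hfix y hy, sub_self, norm_zero, Real.zero_rpow hγ.ne', mul_zero, add_zero]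
  have hmem : xstar ∈ X := by
    by_contra hx
    have hpos : 0 < ‖xstar - π xstar‖ := by
      rw [norm_pos_iff, sub_ne_zero]
      intro h
      exact hx (h ▸ hπmem xstar)
    have h1 := hmin (π xstar)
    rw [hFX _ (hπmem xstar), hF] at h1
    have h2 := mul_pos hM (Real.rpow_pos_of_pos hpos γ)
    linarith
  refine ⟨hmem, fun y hy => ?_⟩
  have h := hmin y
  rwa [hFX _ hmem, hFX _ hy] at h
end

section
/- Let X ⊆ ℝⁿ be a nonempty closed convex set, f : ℝⁿ → ℝ a convex function, M > 0 and γ > 0, and let F(x) = f(π_X(x)) + M·‖x − π_X(x)‖^γ. Then F has no local minima different from the solutions of the constrained problem: every local minimizer x̄ of F over ℝⁿ belongs to X and is a global minimizer of f over X. -/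
/-- For convex `f`, the projective exact penalty function
`F x = f (π_X x) + M * ‖x - π_X x‖ ^ γ` has no local minima different from the
solutions of the constrained problem: every local minimizer `x̄` of `F` belongs
to `X` and is a global minimizer of `f` over `X`. -/
theorem projective_penalty_local_minimizer
    {n : ℕ} (X : Set (EuclideanSpace ℝ (Fin n)))
    (hXne : X.Nonempty) (hXcl : IsClosed X) (hXconv : Convex ℝ X)
    (f : EuclideanSpace ℝ (Fin n) → ℝ) (hf : ConvexOn ℝ Set.univ f)
    (M γ : ℝ) (hM : 0 < M) (hγ : 0 < γ)
    (π : EuclideanSpace ℝ (Fin n) → EuclideanSpace ℝ (Fin n))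
    (hπmem : ∀ x, π x ∈ X)
    (hπmin : ∀ x, ∀ y ∈ X, ‖x - π x‖ ≤ ‖x - y‖)
    (F : EuclideanSpace ℝ (Fin n) → ℝ)
    (hF : ∀ x, F x = f (π x) + M * ‖x - π x‖ ^ γ)
    (xbar : EuclideanSpace ℝ (Fin n))
    (hloc : ∃ ε > 0, ∀ y, ‖y - xbar‖ < ε → F xbar ≤ F y) :
    xbar ∈ X ∧ ∀ y ∈ X, f xbar ≤ f y := by
  obtain ⟨ε, hε, hloc⟩ := hloc
  have uniq : ∀ x, ∀ q ∈ X, ‖x - q‖ ≤ ‖x - π x‖ → q = π x := by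
    intro x q hq hle
    have hmid : (1/2 : ℝ) • q + (1/2 : ℝ) • π x ∈ X :=
      hXconv hq (hπmem x) (by norm_num) (by norm_num) (by norm_num)
    have h1 := hπmin x _ hmid
    have hpar := parallelogram_law_with_norm ℝ (x - q) (x - π x)
    have e1 : (x - q) + (x - π x) = (2:ℝ) • (x - ((1/2 : ℝ) • q + (1/2 : ℝ) • π x)) := by
      module
    have e2 : (x - q) - (x - π x) = -(q - π x) := by abel
    rw [e1, e2, norm_neg, norm_smul, Real.norm_of_nonneg (by norm_num : (0:ℝ) ≤ 2)] at hpar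
    have h0 : ‖q - π x‖ = 0 := by
      have a1 := norm_nonneg (x - π x)
      have a2 := norm_nonneg (x - q)
      have b1 := mul_self_le_mul_self a1 h1
      have b2 := mul_self_le_mul_self a2 hle
      have : ‖q - π x‖ * ‖q - π x‖ ≤ 0 := by nlinarith
      exact mul_self_eq_zero.mp (le_antisymm this (mul_self_nonneg _))
    exact sub_eq_zero.mp (norm_eq_zero.mp h0)
  have fix : ∀ x ∈ X, π x = x := fun x hx => (uniq x x hx (by simp)).symm
  have hFX : ∀ x ∈ X, F x = f x := by
    intro x hx
    rw [hF, fix x hx]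
    simp [Real.zero_rpow hγ.ne']
  have hmem : xbar ∈ X := by
    by_contra hx
    have hd : 0 < ‖xbar - π xbar‖ := by
      rw [norm_pos_iff, sub_ne_zero]
      intro h
      exact hx (h ▸ hπmem xbar)
    set d := xbar - π xbar with hdd
    obtain ⟨t, ht0, ht1, htε⟩ : ∃ t : ℝ, 0 < t ∧ t ≤ 1 ∧ t * ‖d‖ < ε := by
      refine ⟨min 1 (ε / (2 * ‖d‖)), by positivity, min_le_left _ _, ?_⟩
      calc min 1 (ε / (2 * ‖d‖)) * ‖d‖ ≤ (ε / (2 * ‖d‖)) * ‖d‖ := by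
            gcongr; exact min_le_right _ _
        _ = ε / 2 := by field_simp
        _ < ε := by linarith
    have e1 : xbar - t • d - π xbar = (1 - t) • d := by
      rw [hdd]; module
    have n1 : ‖xbar - t • d - π xbar‖ = (1 - t) * ‖d‖ := by
      rw [e1, norm_smul, Real.norm_of_nonneg (by linarith)]
    have n2 : ‖t • d‖ = t * ‖d‖ := by rw [norm_smul, Real.norm_of_nonneg ht0.le]
    have hp : π (xbar - t • d) = π xbar := by
      apply uniq _ _ (hπmem _)
      have h1 := hπmin (xbar - t • d) _ (hπmem xbar)
      have h2 : xbar - π (xbar - t • d) = t • d + (xbar - t • d - π (xbar - t • d)) := by abel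
      have h3 := norm_add_le (t • d) (xbar - t • d - π (xbar - t • d))
      rw [← h2] at h3
      rw [← hdd]
      linarith
    have h := hloc (xbar - t • d) (by
      rw [sub_sub_cancel_left, norm_neg, n2]; exact htε)
    rw [hF, hF, hp, n1, ← hdd] at h
    have hlt : ((1 - t) * ‖d‖) ^ γ < ‖d‖ ^ γ :=
      Real.rpow_lt_rpow (mul_nonneg (by linarith) hd.le) (by nlinarith) hγ
    have := mul_lt_mul_of_pos_left hlt hM
    linarith
  refine ⟨hmem, ?_⟩
  have hl : IsLocalMinOn f X xbar := by
    refine Filter.eventually_iff_exists_mem.mpr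
      ⟨X ∩ Metric.ball xbar ε, Filter.inter_mem self_mem_nhdsWithin
        (mem_nhdsWithin_of_mem_nhds (Metric.ball_mem_nhds _ hε)), ?_⟩
    rintro y ⟨hy, hyb⟩
    have := hloc y (by rwa [← dist_eq_norm])
    rwa [hFX _ hmem, hFX _ hy] at this
  exact fun y hy => IsMinOn.of_isLocalMinOn_of_convexOn hmem hl
    (hf.subset (Set.subset_univ _) hXconv) hy
end

section
/- Let n ≥ 1, let f(x) = Σ_{i=1}^n (1.2)^{i−1}·|x_i − 1|, and let X = {x ∈ ℝⁿ : Σ_{i=1}^n x_i ≤ b, 0 ≤ x_i ≤ 1 for all i} for a real number b with 0 ≤ b < n. Let ⌊b⌋ denote the integer part of b. Then the point x* defined by x*_i = 0 for i = 1,…,n − ⌊b⌋ − 1, x*_{n−⌊b⌋} = b − ⌊b⌋, and x*_i = 1 for i = n − ⌊b⌋ + 1,…,n, belongs to X and is a global minimizer of f over X. -/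
theorem ravine_sum_aux (m k : ℕ) (c : ℝ) :
    ∑ i ∈ Finset.range (m + 1 + k),
      (if i < m then (0 : ℝ) else if i = m then c else 1) = c + k := by
  induction k with
  | zero =>
    rw [add_zero, Finset.sum_range_succ, Finset.sum_eq_zero]
    · simp
    · intro i hi
      rw [if_pos (Finset.mem_range.mp hi)]
  | succ k ih =>
    rw [← add_assoc, Finset.sum_range_succ, ih, if_neg (by omega), if_neg (by omega)]
    push_cast
    ring

/-- For `n ≥ 1`, the separable ravine function
`f x = ∑ i, (1.2)^(i-1) * |x i - 1|` and the feasible set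
`X = {x : ∑ i, x i ≤ b and 0 ≤ x i ≤ 1 for all i}` with `0 ≤ b < n`, the point
`x*` with (0-indexed) components `x* i = 0` for `i < n - ⌊b⌋ - 1`,
`x* (n - ⌊b⌋ - 1) = b - ⌊b⌋`, and `x* i = 1` for `i > n - ⌊b⌋ - 1`, belongs to
`X` and is a global minimizer of `f` over `X`. -/
theorem ravine_budget_minimizer
    {n : ℕ} (hn : 1 ≤ n) (b : ℝ) (hb0 : 0 ≤ b) (hbn : b < n)
    (X : Set (EuclideanSpace ℝ (Fin n)))
    (hX : X = {x : EuclideanSpace ℝ (Fin n) |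
      (∑ i : Fin n, x i) ≤ b ∧ ∀ i, 0 ≤ x i ∧ x i ≤ 1})
    (f : EuclideanSpace ℝ (Fin n) → ℝ)
    (hf : ∀ x, f x = ∑ i : Fin n, (1.2 : ℝ) ^ (i : ℕ) * |x i - 1|)
    (xstar : EuclideanSpace ℝ (Fin n))
    (hxstar : ∀ i : Fin n,
      xstar i =
        if (i : ℕ) < n - ⌊b⌋₊ - 1 then 0
        else if (i : ℕ) = n - ⌊b⌋₊ - 1 then b - ⌊b⌋₊
        else 1) :
    xstar ∈ X ∧ ∀ y ∈ X, f xstar ≤ f y := by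
  have hk : ⌊b⌋₊ < n := (Nat.floor_lt hb0).2 hbn
  have hk1 : (⌊b⌋₊ : ℝ) ≤ b := Nat.floor_le hb0
  have hk2 : b < ⌊b⌋₊ + 1 := Nat.lt_floor_add_one b
  generalize ⌊b⌋₊ = k at *
  obtain ⟨m, hm⟩ : ∃ m, m = n - k - 1 := ⟨_, rfl⟩
  rw [← hm] at hxstar
  have hnm : n = m + 1 + k := by omega
  have hsum : ∑ i : Fin n, xstar i = b := by
    have h1 := ravine_sum_aux m k (b - k)
    rw [← hnm, Finset.sum_range] at h1
    rw [Finset.sum_congr rfl (fun i _ => hxstar i), h1]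
    ring
  have hbox : ∀ i, 0 ≤ xstar i ∧ xstar i ≤ 1 := by
    intro i
    rw [hxstar i]
    split_ifs <;> constructor <;> linarith
  subst hX
  refine ⟨⟨hsum.le, hbox⟩, ?_⟩
  rintro y ⟨hy, hybox⟩
  rw [hf, hf]
  have key : ∀ i : Fin n, (1.2 : ℝ) ^ (i : ℕ) * |xstar i - 1| + (1.2 : ℝ) ^ m * (xstar i - y i)
      ≤ (1.2 : ℝ) ^ (i : ℕ) * |y i - 1| := by
    intro i
    rw [abs_of_nonpos (by linarith [(hbox i).2]), abs_of_nonpos (by linarith [(hybox i).2])]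
    have h0 := (hybox i).1
    have h1 := (hybox i).2
    have hx := hxstar i
    suffices h : 0 ≤ ((1.2 : ℝ) ^ (i : ℕ) - (1.2 : ℝ) ^ m) * (xstar i - y i) by linarith
    rcases lt_trichotomy (i : ℕ) m with h | h | h
    · rw [if_pos h] at hx
      have := pow_le_pow_right₀ (by norm_num : (1 : ℝ) ≤ 1.2) h.le
      exact mul_nonneg_of_nonpos_of_nonpos (by linarith) (by linarith)
    · rw [h]; simp
    · rw [if_neg (by omega), if_neg (by omega)] at hx
      have := pow_le_pow_right₀ (by norm_num : (1 : ℝ) ≤ 1.2) h.le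
      exact mul_nonneg (by linarith) (by linarith)
  have hS := Finset.sum_le_sum (fun i (_ : i ∈ Finset.univ) => key i)
  rw [Finset.sum_add_distrib, ← Finset.mul_sum, Finset.sum_sub_distrib, hsum] at hS
  have : 0 ≤ (1.2 : ℝ) ^ m * (b - ∑ i, y i) := mul_nonneg (by positivity) (by linarith)
  linarith
end
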